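/- arXiv:2305.14736 — 2 statements merged into one kernel-verified Lean document; each statement's English description precedes it below -/
import Mathlib

section
/- (Theorem 2, conditional form: no-regret iterates yield an approximately optimal and approximately feasible policy.) Assume R_o(μ) ≤ R_m for all μ ∈ P, the feasible set F is nonempty, K ≥ 1, and ε ≥ 0. Let μ_1, …, μ_K ∈ P and λ_1, …, λ_K ∈ Λ_B satisfy L(μ, λ_k) ≤ L(μ_k, λ_k) for all μ ∈ P and all k, together with the average-regret bound (1/K)·Σ_{k=1}^K L(μ_k, λ_k) ≤ inf_{λ ∈ Λ_B} (1/K)·Σ_{k=1}^K L(μ_k, λ) + ε. Then the averaged policy μ̄ = (1/K)·Σ_{k=1}^K μ_k satisfies R_o(μ̄) ≥ R* − ε, R_c(μ̄) ≥ ρ − (R_m − R* + ε)/B, and R_f(μ̄) ≥ 1 − δ − (R_m − R* + ε)/B. -/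
/-!
Write `x̄ = ∑ w k • x k` for the averaged iterate and `R*` for the optimal value. A feasible `y`
satisfies `Ro y ≤ L(y, λ k) ≤ L(x k, λ k)`, because `λ k ≥ 0` and `x k` is a best response.
Averaging over `k`, applying the regret bound, and then Jensen's inequality for the concave function
`L(·, l)`, gives `R* ≤ L(x̄, l) + ε` for every multiplier `l`. The three claims are this inequality
at the vertices `(0, 0)`, `(B, 0)`, `(0, B)` of the multiplier set, the last two combined with
`Ro x̄ ≤ Rm`.
-/

/-- The set `Λ_B` of admissible pairs of Lagrange multipliers: nonnegative, with total mass at most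
`B`. -/
def multiplierSet (B : ℝ) : Set (ℝ × ℝ) :=
  {l | 0 ≤ l.1 ∧ 0 ≤ l.2 ∧ l.1 + l.2 ≤ B}

/-- The Lagrangian of maximizing `Ro` subject to `ρ ≤ Rc` and `σ ≤ Rf`. The specification threshold
`1 - δ` is encoded as the single parameter `σ`. -/
def lagrangian {V : Type*} (Ro Rc Rf : V → ℝ) (ρ σ : ℝ) (x : V) (l : ℝ × ℝ) : ℝ :=
  Ro x + l.1 * (Rc x - ρ) + l.2 * (Rf x - σ)

/-- The feasible set `F`: the points of `P` satisfying both constraints `ρ ≤ Rc` and `σ ≤ Rf`. -/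
def feasibleSet {V : Type*} (P : Set V) (Rc Rf : V → ℝ) (ρ σ : ℝ) : Set V :=
  {x | x ∈ P ∧ ρ ≤ Rc x ∧ σ ≤ Rf x}

theorem concaveOn_affineMap {V : Type*} [AddCommGroup V] [Module ℝ V] {C : Set V}
    (hC : Convex ℝ C) (R : V →ᵃ[ℝ] ℝ) : ConcaveOn ℝ C R :=
  ((concaveOn_id convex_univ).comp_affineMap R).subset (Set.subset_univ C) hC

section MultiplierSet

variable {B : ℝ}

theorem nonneg_of_mem_multiplierSet {l : ℝ × ℝ} (hl : l ∈ multiplierSet B) : 0 ≤ l :=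
  ⟨hl.1, hl.2.1⟩

theorem isCompact_multiplierSet (B : ℝ) : IsCompact (multiplierSet B) := by
  have hclosed : IsClosed (multiplierSet B) :=
    (isClosed_le continuous_const continuous_fst).inter <|
      (isClosed_le continuous_const continuous_snd).inter <|
        isClosed_le (continuous_fst.add continuous_snd) continuous_const
  refine (isCompact_Icc (a := ((0, 0) : ℝ × ℝ)) (b := (B, B))).of_isClosed_subset hclosed ?_
  rintro l ⟨h₁, h₂, hB⟩
  exact ⟨⟨h₁, h₂⟩, by linarith, by linarith⟩

theorem zero_mem_multiplierSet (hB : 0 ≤ B) : (0, 0) ∈ multiplierSet B := by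
  simpa [multiplierSet] using hB

theorem left_vertex_mem_multiplierSet (hB : 0 ≤ B) : (B, 0) ∈ multiplierSet B := by
  simpa [multiplierSet] using hB

theorem right_vertex_mem_multiplierSet (hB : 0 ≤ B) : (0, B) ∈ multiplierSet B := by
  simpa [multiplierSet] using hB

end MultiplierSet

section Lagrangian

variable {V : Type*} {P : Set V} {Ro Rc Rf : V → ℝ} {ρ σ B : ℝ} {l : ℝ × ℝ} {x y : V}

theorem continuous_lagrangian (x : V) : Continuous (lagrangian Ro Rc Rf ρ σ x) := by
  unfold lagrangian
  fun_prop

theorem le_lagrangian_of_mem_feasibleSet (hy : y ∈ feasibleSet P Rc Rf ρ σ) (hl : 0 ≤ l) :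
    Ro y ≤ lagrangian Ro Rc Rf ρ σ y l := by
  obtain ⟨-, hc, hf⟩ := hy
  have hc' := mul_nonneg hl.1 (sub_nonneg.2 hc)
  have hf' := mul_nonneg hl.2 (sub_nonneg.2 hf)
  unfold lagrangian
  linarith

theorem concaveOn_lagrangian [AddCommGroup V] [Module ℝ V] {C : Set V} (hRo : ConcaveOn ℝ C Ro)
    (hRc : ConcaveOn ℝ C Rc) (hRf : ConcaveOn ℝ C Rf) (hl : 0 ≤ l) :
    ConcaveOn ℝ C fun x => lagrangian Ro Rc Rf ρ σ x l :=
  (hRo.add ((hRc.sub (convexOn_const ρ hRc.1)).smul hl.1)).add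
    ((hRf.sub (convexOn_const σ hRf.1)).smul hl.2)

theorem approx_opt_feasible_of_le_lagrangian {R Rm ε : ℝ} (hB : 0 < B)
    (h : ∀ l ∈ multiplierSet B, R ≤ lagrangian Ro Rc Rf ρ σ x l + ε) (hx : Ro x ≤ Rm) :
    R - ε ≤ Ro x ∧ ρ - (Rm - R + ε) / B ≤ Rc x ∧ σ - (Rm - R + ε) / B ≤ Rf x := by
  have h₀ := h _ (zero_mem_multiplierSet hB.le)
  have hc := h _ (left_vertex_mem_multiplierSet hB.le)
  have hf := h _ (right_vertex_mem_multiplierSet hB.le)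
  simp only [lagrangian, zero_mul, add_zero] at h₀ hc hf
  refine ⟨by linarith, ?_, ?_⟩ <;>
  · rw [sub_le_comm, le_div_iff₀ hB]
    linarith

end Lagrangian

section Average

variable {V ι : Type*} {P : Set V} {Ro Rc Rf : V → ℝ} {ρ σ B ε : ℝ} {l : ℝ × ℝ}
  {t : Finset ι} {w : ι → ℝ} {x : ι → V} {lam : ι → ℝ × ℝ}

theorem iInf_sum_lagrangian_le (hl : l ∈ multiplierSet B) :
    ⨅ l : multiplierSet B, ∑ k ∈ t, w k * lagrangian Ro Rc Rf ρ σ (x k) l ≤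
      ∑ k ∈ t, w k * lagrangian Ro Rc Rf ρ σ (x k) l := by
  have hcont : Continuous fun l => ∑ k ∈ t, w k * lagrangian Ro Rc Rf ρ σ (x k) l :=
    continuous_finsetSum _ fun k _ => (continuous_lagrangian (x k)).const_mul (w k)
  -- The real infimum of a family not bounded below is `0`; compactness rules this case out.
  have hbdd := (isCompact_multiplierSet B).bddBelow_image hcont.continuousOn
  rw [Set.image_eq_range] at hbdd
  exact ciInf_le hbdd ⟨l, hl⟩

theorem sSup_feasibleSet_le_sum_lagrangian (hF : (feasibleSet P Rc Rf ρ σ).Nonempty)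
    (hw₀ : ∀ k ∈ t, 0 ≤ w k) (hw₁ : ∑ k ∈ t, w k = 1) (hlam : ∀ k ∈ t, 0 ≤ lam k)
    (hbest : ∀ k ∈ t, ∀ y ∈ P,
      lagrangian Ro Rc Rf ρ σ y (lam k) ≤ lagrangian Ro Rc Rf ρ σ (x k) (lam k)) :
    sSup (Ro '' feasibleSet P Rc Rf ρ σ) ≤
      ∑ k ∈ t, w k * lagrangian Ro Rc Rf ρ σ (x k) (lam k) := by
  refine csSup_le (hF.image Ro) ?_
  rintro _ ⟨y, hy, rfl⟩
  exact (convex_Ici (Ro y)).sum_mem hw₀ hw₁ fun k hk =>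
    (le_lagrangian_of_mem_feasibleSet hy (hlam k hk)).trans (hbest k hk y hy.1)

theorem sum_lagrangian_le_lagrangian_sum [AddCommGroup V] [Module ℝ V] {C : Set V}
    (hRo : ConcaveOn ℝ C Ro) (hRc : ConcaveOn ℝ C Rc) (hRf : ConcaveOn ℝ C Rf)
    (hw₀ : ∀ k ∈ t, 0 ≤ w k) (hw₁ : ∑ k ∈ t, w k = 1) (hx : ∀ k ∈ t, x k ∈ C) (hl : 0 ≤ l) :
    ∑ k ∈ t, w k * lagrangian Ro Rc Rf ρ σ (x k) l ≤
      lagrangian Ro Rc Rf ρ σ (∑ k ∈ t, w k • x k) l :=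
  (concaveOn_lagrangian hRo hRc hRf hl).le_map_sum hw₀ hw₁ hx

theorem noregret_yields_approx_opt_feasible_general [AddCommGroup V] [Module ℝ V] {Rm : ℝ}
    (hB : 0 < B) (hRo : ConcaveOn ℝ (convexHull ℝ P) Ro) (hRc : ConcaveOn ℝ (convexHull ℝ P) Rc)
    (hRf : ConcaveOn ℝ (convexHull ℝ P) Rf) (hRm : ∀ y ∈ convexHull ℝ P, Ro y ≤ Rm)
    (hF : (feasibleSet P Rc Rf ρ σ).Nonempty)
    (hw₀ : ∀ k ∈ t, 0 ≤ w k) (hw₁ : ∑ k ∈ t, w k = 1)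
    (hx : ∀ k ∈ t, x k ∈ P) (hlam : ∀ k ∈ t, lam k ∈ multiplierSet B)
    (hbest : ∀ k ∈ t, ∀ y ∈ P,
      lagrangian Ro Rc Rf ρ σ y (lam k) ≤ lagrangian Ro Rc Rf ρ σ (x k) (lam k))
    (hregret : ∑ k ∈ t, w k * lagrangian Ro Rc Rf ρ σ (x k) (lam k) ≤
      (⨅ l : multiplierSet B, ∑ k ∈ t, w k * lagrangian Ro Rc Rf ρ σ (x k) l) + ε) :
    let Rstar := sSup (Ro '' feasibleSet P Rc Rf ρ σ)
    let xbar := ∑ k ∈ t, w k • x k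
    Rstar - ε ≤ Ro xbar ∧ ρ - (Rm - Rstar + ε) / B ≤ Rc xbar ∧
      σ - (Rm - Rstar + ε) / B ≤ Rf xbar := by
  intro Rstar xbar
  have hxC : ∀ k ∈ t, x k ∈ convexHull ℝ P := fun k hk => subset_convexHull ℝ P (hx k hk)
  have hbar : xbar ∈ convexHull ℝ P := (convex_convexHull ℝ P).sum_mem hw₀ hw₁ hxC
  refine approx_opt_feasible_of_le_lagrangian hB (fun l hl => ?_) (hRm xbar hbar)
  calc Rstar ≤ ∑ k ∈ t, w k * lagrangian Ro Rc Rf ρ σ (x k) (lam k) :=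
        sSup_feasibleSet_le_sum_lagrangian hF hw₀ hw₁
          (fun k hk => nonneg_of_mem_multiplierSet (hlam k hk)) hbest
    _ ≤ (⨅ l : multiplierSet B, ∑ k ∈ t, w k * lagrangian Ro Rc Rf ρ σ (x k) l) + ε := hregret
    _ ≤ ∑ k ∈ t, w k * lagrangian Ro Rc Rf ρ σ (x k) l + ε := by
        gcongr
        exact iInf_sum_lagrangian_le hl
    _ ≤ lagrangian Ro Rc Rf ρ σ xbar l + ε := by
        gcongr
        exact sum_lagrangian_le_lagrangian_sum hRo hRc hRf hw₀ hw₁ hxC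
          (nonneg_of_mem_multiplierSet hl)

end Average

/-- **Theorem 2, conditional form.**  If each `μ_k` exactly maximizes `L(·, λ_k)` over `P`
and the iterates satisfy the average-regret bound `ε` over `Λ_B`, then the averaged policy
`μ̄ = (1/K) ∑ μ_k` is `ε`-optimal in objective reward and `(Rm − R* + ε)/B`-feasible in
both constraints. -/
theorem noregret_yields_approx_opt_feasible
    {V : Type*} [AddCommGroup V] [Module ℝ V]
    (P : Set V) (hPne : P.Nonempty) (hPconv : Convex ℝ P)
    (Ro Rc Rf : V →ᵃ[ℝ] ℝ)
    (ρ δ B Rm : ℝ) (hB : 0 < B)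
    (L : V → ℝ × ℝ → ℝ)
    (hL : ∀ μ lam, L μ lam = Ro μ + lam.1 * (Rc μ - ρ) + lam.2 * (Rf μ - (1 - δ)))
    (ΛB : Set (ℝ × ℝ))
    (hΛB : ΛB = {lam : ℝ × ℝ | 0 ≤ lam.1 ∧ 0 ≤ lam.2 ∧ lam.1 + lam.2 ≤ B})
    (hRo : ∀ μ ∈ P, Ro μ ≤ Rm)
    (F : Set V) (hF : F = {μ | μ ∈ P ∧ ρ ≤ Rc μ ∧ 1 - δ ≤ Rf μ})
    (hFne : F.Nonempty)
    (Rstar : ℝ) (hRstar : Rstar = sSup ((fun μ => Ro μ) '' F))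
    (K : ℕ) (hK : 1 ≤ K) (ε : ℝ) (hε : 0 ≤ ε)
    (μ : ℕ → V) (lam : ℕ → ℝ × ℝ)
    (hμP : ∀ k ∈ Finset.Icc 1 K, μ k ∈ P)
    (hlamB : ∀ k ∈ Finset.Icc 1 K, lam k ∈ ΛB)
    (hμopt : ∀ k ∈ Finset.Icc 1 K, ∀ ν ∈ P, L ν (lam k) ≤ L (μ k) (lam k))
    (hregret : (K : ℝ)⁻¹ * ∑ k ∈ Finset.Icc 1 K, L (μ k) (lam k) ≤
        (⨅ l : ΛB, (K : ℝ)⁻¹ * ∑ k ∈ Finset.Icc 1 K, L (μ k) (l : ℝ × ℝ)) + ε)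
    (μbar : V) (hμbar : μbar = (K : ℝ)⁻¹ • ∑ k ∈ Finset.Icc 1 K, μ k) :
    Ro μbar ≥ Rstar - ε ∧
    Rc μbar ≥ ρ - (Rm - Rstar + ε) / B ∧
    Rf μbar ≥ 1 - δ - (Rm - Rstar + ε) / B := by
  obtain rfl : L = lagrangian Ro Rc Rf ρ (1 - δ) := funext₂ hL
  subst hΛB hF hRstar hμbar
  have hconc := concaveOn_affineMap (convex_convexHull ℝ P)
  have hweights : ∑ _k ∈ Finset.Icc 1 K, (K : ℝ)⁻¹ = 1 := by
    have hK₀ : (K : ℝ) ≠ 0 := by positivity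
    simp [hK₀]
  simp only [Finset.mul_sum] at hregret
  rw [Finset.smul_sum]
  exact noregret_yields_approx_opt_feasible_general hB (hconc Ro) (hconc Rc) (hconc Rf)
    (hPconv.convexHull_eq.symm ▸ hRo) hFne (fun _ _ => by positivity) hweights hμP hlamB hμopt
    hregret
end

section
/- (Lemma 4, full Lagrangian discounting identity.) Let (Ω, 𝒜, P) be a probability space, γ ∈ (0, 1), and T : Ω → ℕ a measurable random variable with P(T = t) = (1 − γ)·γ^t for every t ∈ ℕ. Then for all bounded sequences a, b, f : ℕ → ℝ and all reals λ^f, λ^c: E[Σ_{t=0}^{T} a_t] + λ^f·E[f(T + 1)] + λ^c·E[Σ_{t=0}^{T} b_t] = Σ_{t=0}^∞ γ^t·( a_t + (λ^f·(1 − γ)/γ)·f(t) + λ^c·b_t ) − (λ^f·(1 − γ)/γ)·f(0), where all sums converge absolutely. (Consequently, maximizing the Lagrangian under a geometrically distributed time horizon is equivalent to maximizing an infinite-horizon γ-discounted reward.) -/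
open MeasureTheory

/-!
Under the geometric law, `E[g(T)] = (1 - γ) ∑ γ^t g(t)`. As power series in `γ`, the partial sums
of `c` are the coefficients of `(∑ γ^t c_t) / (1 - γ)`, so for `g(t) = ∑_{s ≤ t} c_s` the factor
`1 - γ` cancels and leaves `∑ γ^t c_t`. For `g(t) = f(t + 1)`, an index shift turns the series into
`(∑ γ^t f_t - f_0) / γ`.
-/

section DiscountedSeries

lemma hasSum_pow_smul_of_hasSum_pow_smul_sum_range_succ {R M : Type*} [Ring R] [AddCommGroup M]
    [Module R M] [TopologicalSpace M] [IsTopologicalAddGroup M] [ContinuousConstSMul R M]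
    {r : R} {c : ℕ → M} {m : M}
    (h : HasSum (fun t => r ^ t • ∑ s ∈ Finset.range (t + 1), c s) m) :
    HasSum (fun t => r ^ t • c t) ((1 - r) • m) := by
  have h_diff := ((hasSum_nat_add_iff' 1).2 h).sub (h.const_smul r)
  refine (hasSum_nat_add_iff' 1).1 ?_
  convert! h_diff using 1
  · funext t
    rw [Finset.sum_range_succ c (t + 1), smul_add, smul_smul, ← pow_succ', add_sub_cancel_left]
  · simp [sub_smul, sub_right_comm]

lemma hasSum_pow_smul_succ {K M : Type*} [DivisionRing K] [AddCommGroup M] [Module K M]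
    [TopologicalSpace M] [IsTopologicalAddGroup M] [ContinuousConstSMul K M]
    {r : K} (hr : r ≠ 0) {c : ℕ → M} {m : M} (h : HasSum (fun t => r ^ t • c t) m) :
    HasSum (fun t => r ^ t • c (t + 1)) (r⁻¹ • (m - c 0)) := by
  simpa [smul_smul, pow_succ', hr] using ((hasSum_nat_add_iff' 1).2 h).const_smul r⁻¹

variable {E : Type*} [SeminormedAddCommGroup E] {r : ℝ} {c d : ℕ → E}

lemma summable_pow_mul_norm_of_bounded (hr₀ : 0 ≤ r) (hr₁ : r < 1) (hc : ∃ M, ∀ t, ‖c t‖ ≤ M) :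
    Summable fun t => r ^ t * ‖c t‖ := by
  obtain ⟨M, hM⟩ := hc
  refine ((summable_geometric_of_lt_one hr₀ hr₁).mul_right M).of_nonneg_of_le
    (fun t => by positivity) fun t => ?_
  gcongr
  exact hM t

lemma summable_pow_mul_norm_succ (hr : r ≠ 0) (hc : Summable fun t => r ^ t * ‖c t‖) :
    Summable fun t => r ^ t * ‖c (t + 1)‖ :=
  (hasSum_pow_smul_succ (c := fun t => ‖c t‖) hr hc.hasSum).summable

lemma summable_pow_mul_norm_sum_range_succ (hr₀ : 0 ≤ r) (hr₁ : r < 1)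
    (hc : Summable fun t => r ^ t * ‖c t‖) :
    Summable fun t => r ^ t * ‖∑ s ∈ Finset.range (t + 1), c s‖ := by
  have h_cauchy : Summable fun t =>
      ∑ s ∈ Finset.range (t + 1), r ^ s * ‖c s‖ * r ^ (t - s) :=
    (summable_norm_sum_mul_range_of_summable_norm hc.norm
      (summable_geometric_of_lt_one hr₀ hr₁).norm).of_norm
  refine h_cauchy.of_nonneg_of_le (fun t => by positivity) fun t => ?_
  calc r ^ t * ‖∑ s ∈ Finset.range (t + 1), c s‖
    _ ≤ r ^ t * ∑ s ∈ Finset.range (t + 1), ‖c s‖ := by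
      gcongr
      exact norm_sum_le _ _
    _ = ∑ s ∈ Finset.range (t + 1), r ^ s * ‖c s‖ * r ^ (t - s) := by
      rw [Finset.mul_sum]
      refine Finset.sum_congr rfl fun s hs => ?_
      rw [mul_right_comm, ← pow_add, Nat.add_sub_of_le (Finset.mem_range_succ_iff.1 hs)]

variable [NormedSpace ℝ E]

lemma summable_pow_mul_norm_add_smul (hr : 0 ≤ r) (hc : Summable fun t => r ^ t * ‖c t‖)
    (hd : Summable fun t => r ^ t * ‖d t‖) (k : ℝ) :
    Summable fun t => r ^ t * ‖c t + k • d t‖ := by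
  refine (hc.add (hd.mul_left |k|)).of_nonneg_of_le (fun t => by positivity) fun t => ?_
  calc r ^ t * ‖c t + k • d t‖
    _ ≤ r ^ t * (‖c t‖ + |k| * ‖d t‖) := by
      gcongr
      exact (norm_add_le _ _).trans_eq (by rw [norm_smul, Real.norm_eq_abs])
    _ = r ^ t * ‖c t‖ + |k| * (r ^ t * ‖d t‖) := by ring

lemma norm_pow_smul_of_nonneg (hr : 0 ≤ r) (t : ℕ) (x : E) : ‖r ^ t • x‖ = r ^ t * ‖x‖ := by
  rw [norm_smul, norm_pow, Real.norm_of_nonneg hr]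

lemma summable_pow_smul_of_summable_pow_mul_norm [CompleteSpace E] (hr : 0 ≤ r)
    (hc : Summable fun t => r ^ t * ‖c t‖) : Summable fun t => r ^ t • c t :=
  .of_norm (by simpa only [norm_pow_smul_of_nonneg hr] using hc)

lemma tsum_pow_smul_add_smul [CompleteSpace E] [T2Space E] (hr : 0 ≤ r)
    (hc : Summable fun t => r ^ t * ‖c t‖) (hd : Summable fun t => r ^ t * ‖d t‖) (k : ℝ) :
    ∑' t, r ^ t • (c t + k • d t) = ∑' t, r ^ t • c t + k • ∑' t, r ^ t • d t := by
  have hc_sum := summable_pow_smul_of_summable_pow_mul_norm hr hc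
  have hd_sum := summable_pow_smul_of_summable_pow_mul_norm hr hd
  simp only [smul_add, smul_comm _ k]
  rw [hc_sum.tsum_add (hd_sum.const_smul k), hd_sum.tsum_const_smul]

end DiscountedSeries

section GeometricLaw

open ProbabilityTheory

variable {Ω : Type*} [MeasurableSpace Ω] {μ : Measure Ω} {T : Ω → ℕ} {p : unitInterval}

lemma hasLaw_geometricMeasure_of_measure_eq (hp : p ≠ 0) (hT : AEMeasurable T μ)
    (h : ∀ t : ℕ, μ {ω | T ω = t} = ENNReal.ofReal ((1 - p) ^ t * p)) :
    HasLaw T (geometricMeasure p) μ where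
  aemeasurable := hT
  map_eq := Measure.ext_of_singleton fun t => by
    rw [geometricMeasure_singleton hp, Measure.map_apply_of_aemeasurable hT (.singleton t), ← h]
    rfl

variable {E : Type*} [NormedAddCommGroup E] {c : ℕ → E}

lemma integrable_geometricMeasure_of_summable (hp : p ≠ 0)
    (hc : Summable fun t => (1 - p : ℝ) ^ t * ‖c t‖) : Integrable c (geometricMeasure p) :=
  (integrable_geometricMeasure_iff hp).2 <| by
    simpa only [mul_right_comm] using hc.mul_right (p : ℝ)

lemma integrable_comp_of_hasLaw_geometricMeasure (hp : p ≠ 0)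
    (hT : HasLaw T (geometricMeasure p) μ) (hc : Summable fun t => (1 - p : ℝ) ^ t * ‖c t‖) :
    Integrable (fun ω => c (T ω)) μ := by
  refine Integrable.comp_aemeasurable ?_ hT.aemeasurable
  rw [hT.map_eq]
  exact integrable_geometricMeasure_of_summable hp hc

lemma integrable_sum_range_succ_of_hasLaw_geometricMeasure (hp : p ≠ 0)
    (hT : HasLaw T (geometricMeasure p) μ) (hc : Summable fun t => (1 - p : ℝ) ^ t * ‖c t‖) :
    Integrable (fun ω => ∑ t ∈ Finset.range (T ω + 1), c t) μ :=
  integrable_comp_of_hasLaw_geometricMeasure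
    (c := fun t => ∑ s ∈ Finset.range (t + 1), c s) hp hT <|
    summable_pow_mul_norm_sum_range_succ (by grind) (by grind) hc

lemma integrable_comp_succ_of_hasLaw_geometricMeasure (hp₀ : p ≠ 0) (hp₁ : p ≠ 1)
    (hT : HasLaw T (geometricMeasure p) μ) (hc : Summable fun t => (1 - p : ℝ) ^ t * ‖c t‖) :
    Integrable (fun ω => c (T ω + 1)) μ :=
  integrable_comp_of_hasLaw_geometricMeasure (c := fun t => c (t + 1)) hp₀ hT <|
    summable_pow_mul_norm_succ (by grind) hc

variable [NormedSpace ℝ E] [CompleteSpace E]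

lemma integral_comp_of_hasLaw_geometricMeasure (hp : p ≠ 0)
    (hT : HasLaw T (geometricMeasure p) μ) (hc : Summable fun t => (1 - p : ℝ) ^ t * ‖c t‖) :
    ∫ ω, c (T ω) ∂μ = (p : ℝ) • ∑' t, (1 - p : ℝ) ^ t • c t := by
  have hc_int := integrable_geometricMeasure_of_summable hp hc
  calc ∫ ω, c (T ω) ∂μ
    _ = ∫ t, c t ∂geometricMeasure p := hT.integral_comp hc_int.aestronglyMeasurable
    _ = ∑' t, ((1 - p : ℝ) ^ t * p) • c t := integral_geometricMeasure' hp hc_int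
    _ = (p : ℝ) • ∑' t, (1 - p : ℝ) ^ t • c t := by
      simp only [mul_comm _ (p : ℝ), mul_smul, tsum_const_smul'']

lemma integral_sum_range_succ_of_hasLaw_geometricMeasure (hp : p ≠ 0)
    (hT : HasLaw T (geometricMeasure p) μ) (hc : Summable fun t => (1 - p : ℝ) ^ t * ‖c t‖) :
    ∫ ω, ∑ t ∈ Finset.range (T ω + 1), c t ∂μ = ∑' t, (1 - p : ℝ) ^ t • c t := by
  have hr : (0 : ℝ) ≤ 1 - p := by grind
  have h_norm := summable_pow_mul_norm_sum_range_succ hr (by grind) hc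
  have h_sum := summable_pow_smul_of_summable_pow_mul_norm hr h_norm
  rw [integral_comp_of_hasLaw_geometricMeasure hp hT h_norm,
    (hasSum_pow_smul_of_hasSum_pow_smul_sum_range_succ h_sum.hasSum).tsum_eq, sub_sub_cancel]

lemma integral_comp_succ_of_hasLaw_geometricMeasure (hp₀ : p ≠ 0) (hp₁ : p ≠ 1)
    (hT : HasLaw T (geometricMeasure p) μ) (hc : Summable fun t => (1 - p : ℝ) ^ t * ‖c t‖) :
    ∫ ω, c (T ω + 1) ∂μ = (p / (1 - p) : ℝ) • (∑' t, (1 - p : ℝ) ^ t • c t - c 0) := by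
  have hr : (1 - p : ℝ) ≠ 0 := by grind
  have h_sum := summable_pow_smul_of_summable_pow_mul_norm (by grind) hc
  rw [integral_comp_of_hasLaw_geometricMeasure (c := fun t => c (t + 1)) hp₀ hT
      (summable_pow_mul_norm_succ hr hc),
    (hasSum_pow_smul_succ hr h_sum.hasSum).tsum_eq, smul_smul, div_eq_mul_inv]

theorem geometric_horizon_lagrangian_discounting_general
    {γ : ℝ} (hγ : γ ∈ Set.Ioo (0 : ℝ) 1) (hTmeas : AEMeasurable T μ)
    (hT : ∀ t : ℕ, μ {ω | T ω = t} = ENNReal.ofReal ((1 - γ) * γ ^ t))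
    {a b f : ℕ → E}
    (ha : Summable fun t => γ ^ t * ‖a t‖) (hb : Summable fun t => γ ^ t * ‖b t‖)
    (hf : Summable fun t => γ ^ t * ‖f t‖)
    (lamf lamc : ℝ) :
    Integrable (fun ω => ∑ t ∈ Finset.range (T ω + 1), a t) μ ∧
    Integrable (fun ω => ∑ t ∈ Finset.range (T ω + 1), b t) μ ∧
    Integrable (fun ω => f (T ω + 1)) μ ∧
    Summable (fun t : ℕ =>
      ‖γ ^ t • (a t + (lamf * (1 - γ) / γ) • f t + lamc • b t)‖) ∧
    (∫ ω, (∑ t ∈ Finset.range (T ω + 1), a t) ∂μ)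
      + lamf • (∫ ω, f (T ω + 1) ∂μ)
      + lamc • (∫ ω, (∑ t ∈ Finset.range (T ω + 1), b t) ∂μ)
      = (∑' t : ℕ, γ ^ t • (a t + (lamf * (1 - γ) / γ) • f t + lamc • b t))
        - (lamf * (1 - γ) / γ) • f 0 := by
  obtain ⟨hγ₀, hγ₁⟩ := hγ
  obtain ⟨p, rfl⟩ : ∃ p : unitInterval, γ = 1 - p :=
    ⟨⟨1 - γ, by linarith, by linarith⟩, (sub_sub_cancel 1 γ).symm⟩
  have hp₀ : p ≠ 0 := by rintro rfl; simp at hγ₁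
  have hp₁ : p ≠ 1 := by rintro rfl; simp at hγ₀
  simp only [sub_sub_cancel, mul_comm (p : ℝ)] at hT ⊢
  have h_law := hasLaw_geometricMeasure_of_measure_eq hp₀ hTmeas hT
  have haf := summable_pow_mul_norm_add_smul hγ₀.le ha hf (lamf * p / (1 - p))
  refine ⟨integrable_sum_range_succ_of_hasLaw_geometricMeasure hp₀ h_law ha,
    integrable_sum_range_succ_of_hasLaw_geometricMeasure hp₀ h_law hb,
    integrable_comp_succ_of_hasLaw_geometricMeasure hp₀ hp₁ h_law hf, ?_, ?_⟩
  · simpa only [norm_pow_smul_of_nonneg hγ₀.le] using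
      summable_pow_mul_norm_add_smul hγ₀.le haf hb lamc
  · rw [integral_sum_range_succ_of_hasLaw_geometricMeasure hp₀ h_law ha,
      integral_sum_range_succ_of_hasLaw_geometricMeasure hp₀ h_law hb,
      integral_comp_succ_of_hasLaw_geometricMeasure hp₀ hp₁ h_law hf,
      tsum_pow_smul_add_smul hγ₀.le haf hb, tsum_pow_smul_add_smul hγ₀.le ha hf]
    module

end GeometricLaw

/-- **Lemma 4 (full Lagrangian discounting identity).**
If `T` is a geometric random horizon with `P(T = t) = (1 − γ)γ^t` and `a, b, f` are
bounded real sequences, then for all reals `λ^f, λ^c`,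
`E[∑_{t=0}^{T} a_t] + λ^f E[f(T+1)] + λ^c E[∑_{t=0}^{T} b_t]
  = ∑_{t=0}^∞ γ^t (a_t + (λ^f (1 − γ)/γ) f(t) + λ^c b_t) − (λ^f (1 − γ)/γ) f(0)`,
all sums converging absolutely.  Consequently, maximizing the Lagrangian under a
geometrically distributed time horizon is equivalent to maximizing an infinite-horizon
`γ`-discounted reward. -/
theorem geometric_horizon_lagrangian_discounting
    {Ω : Type*} [MeasurableSpace Ω] (μ : Measure Ω) [IsProbabilityMeasure μ]
    (γ : ℝ) (hγ : γ ∈ Set.Ioo (0 : ℝ) 1)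
    (T : Ω → ℕ) (hTmeas : Measurable T)
    (hT : ∀ t : ℕ, μ {ω | T ω = t} = ENNReal.ofReal ((1 - γ) * γ ^ t))
    (a b f : ℕ → ℝ)
    (ha : ∃ M : ℝ, ∀ t, |a t| ≤ M) (hb : ∃ M : ℝ, ∀ t, |b t| ≤ M)
    (hf : ∃ M : ℝ, ∀ t, |f t| ≤ M)
    (lamf lamc : ℝ) :
    Integrable (fun ω => ∑ t ∈ Finset.range (T ω + 1), a t) μ ∧
    Integrable (fun ω => ∑ t ∈ Finset.range (T ω + 1), b t) μ ∧
    Integrable (fun ω => f (T ω + 1)) μ ∧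
    Summable (fun t : ℕ =>
      |γ ^ t * (a t + lamf * (1 - γ) / γ * f t + lamc * b t)|) ∧
    (∫ ω, (∑ t ∈ Finset.range (T ω + 1), a t) ∂μ)
      + lamf * (∫ ω, f (T ω + 1) ∂μ)
      + lamc * (∫ ω, (∑ t ∈ Finset.range (T ω + 1), b t) ∂μ)
      = (∑' t : ℕ, γ ^ t * (a t + lamf * (1 - γ) / γ * f t + lamc * b t))
        - lamf * (1 - γ) / γ * f 0 := by
  simpa only [smul_eq_mul, Real.norm_eq_abs] using
    geometric_horizon_lagrangian_discounting_general (E := ℝ) hγ hTmeas.aemeasurable hT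
      (summable_pow_mul_norm_of_bounded hγ.1.le hγ.2 ha)
      (summable_pow_mul_norm_of_bounded hγ.1.le hγ.2 hb)
      (summable_pow_mul_norm_of_bounded hγ.1.le hγ.2 hf) lamf lamc
end
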